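/- Let N ∈ ℕ and let q, a, b, t ∈ ℂ satisfy (q;q)_N ≠ 0, (bq;q)_N ≠ 0, (t;q)_N ≠ 0 and (atq;q)_N ≠ 0. Then F_N(a,b;t) = (atq;q)_N (q;q)_N / ((t;q)_N (bq;q)_N) · Σ_{n=0}^{N} (b;q)_n (t;q)_n q^n / ((atq;q)_n (q;q)_n). -/

import Mathlib

/-!
Multiplying `fineF q a b t N` by `(t;q)_N (bq;q)_N / (q;q)_N` turns it into `∑_{n ≤ N} f(N, n)` with
`f(N, n) = (aq;q)_n t^n (t;q)_{N-n} (bq^{n+1};q)_{N-n} / (q;q)_{N-n}` (`fineTerm`).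
The same normalization of the right-hand side gives
`R_N = (atq;q)_N ∑_{n ≤ N} (b;q)_n (t;q)_n q^n / ((atq;q)_n (q;q)_n)`, which plainly satisfies
`R_{N+1} = (1 - atq^{N+1}) R_N + (b;q)_{N+1} (t;q)_{N+1} q^{N+1} / (q;q)_{N+1}`.
The sum of the `f(N, n)` satisfies the same recurrence by creative telescoping: with the certificate
`G(N, n) = -q^{N+1-n} (aq;q)_n t^n (t;q)_{N+1-n} (bq^n;q)_{N+1-n} / (q;q)_{N+1-n}` (`fineCert`),
`f(N+1, n) - (1 - atq^{N+1}) f(N, n) = G(N, n+1) - G(N, n)` for `n ≤ N` (`fineTerm_telescope`),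
while `f(N+1, N+1) = -G(N, N+1)`, so the total is `-G(N, 0)`, the inhomogeneous term.
Induction on `N` concludes.
-/

open Finset

/-- The q-Pochhammer symbol (z; q)_n = prod_{j=0}^{n-1} (1 - z q^j). -/
noncomputable def qPoch (q z : ℂ) (n : ℕ) : ℂ :=
  ∏ j ∈ Finset.range n, (1 - z * q ^ j)

/-- The Gaussian binomial coefficient [N, n]_q = (q;q)_N / ((q;q)_n (q;q)_{N-n}). -/
noncomputable def qBinom (q : ℂ) (N n : ℕ) : ℂ :=
  qPoch q q N / (qPoch q q n * qPoch q q (N - n))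

/-- The finite analogue of Fine's function,
F_N(a, b; t) = sum_{n=0}^{N} [N,n]_q (aq;q)_n (t;q)_{N-n} (q;q)_n t^n / ((bq;q)_n (t;q)_N). -/
noncomputable def fineF (q a b t : ℂ) (N : ℕ) : ℂ :=
  ∑ n ∈ Finset.range (N + 1),
    qBinom q N n * (qPoch q (a * q) n * qPoch q t (N - n) * qPoch q q n * t ^ n) /
      (qPoch q (b * q) n * qPoch q t N)

lemma qPoch_zero (q z : ℂ) : qPoch q z 0 = 1 := by simp [qPoch]

lemma qPoch_succ (q z : ℂ) (n : ℕ) : qPoch q z (n + 1) = qPoch q z n * (1 - z * q ^ n) := by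
  simp [qPoch, Finset.prod_range_succ]

lemma qPoch_add (q z : ℂ) (m n : ℕ) :
    qPoch q z (m + n) = qPoch q z m * qPoch q (z * q ^ m) n := by
  simp only [qPoch, Finset.prod_range_add, pow_add, mul_assoc]

lemma qPoch_succ' (q z : ℂ) (n : ℕ) : qPoch q z (n + 1) = (1 - z) * qPoch q (z * q) n := by
  rw [add_comm, qPoch_add, qPoch_succ, qPoch_zero]
  simp

lemma qPoch_ne_zero_of_le {q z : ℂ} {m n : ℕ} (h : m ≤ n) (hn : qPoch q z n ≠ 0) :
    qPoch q z m ≠ 0 := by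
  obtain ⟨k, rfl⟩ := Nat.exists_eq_add_of_le h
  rw [qPoch_add] at hn
  exact left_ne_zero_of_mul hn

/-- The `n`-th summand of the finite Fine function multiplied by `(t;q)_N (bq;q)_N / (q;q)_N`;
meaningful for `n ≤ N`. -/
noncomputable def fineTerm (q a b t : ℂ) (N n : ℕ) : ℂ :=
  qPoch q (a * q) n * t ^ n * qPoch q t (N - n) * qPoch q (b * q ^ (n + 1)) (N - n) /
    qPoch q q (N - n)

/-- The telescoping certificate for `fineTerm`; meaningful for `n ≤ N + 1`. -/
noncomputable def fineCert (q a b t : ℂ) (N n : ℕ) : ℂ :=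
  -(q ^ (N + 1 - n) * (qPoch q (a * q) n * t ^ n * qPoch q t (N + 1 - n) *
    qPoch q (b * q ^ n) (N + 1 - n)) / qPoch q q (N + 1 - n))

lemma fineTerm_telescope {q : ℂ} (a b t : ℂ) {N n : ℕ} (hn : n ≤ N)
    (hq : qPoch q q (N + 1) ≠ 0) :
    fineTerm q a b t (N + 1) n - (1 - a * t * q * q ^ N) * fineTerm q a b t N n =
      fineCert q a b t N (n + 1) - fineCert q a b t N n := by
  obtain ⟨m, rfl⟩ := Nat.exists_eq_add_of_le hn
  have hm : qPoch q q (m + 1) ≠ 0 := qPoch_ne_zero_of_le (by omega) hq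
  have e1 : n + m + 1 - n = m + 1 := by omega
  have e2 : n + m - n = m := by omega
  have e3 : n + m + 1 - (n + 1) = m := by omega
  -- In `fineCert` the base `b * q ^ n` must lose its first factor, elsewhere the last one goes.
  have e4 : qPoch q (b * q ^ n) (m + 1) = (1 - b * q ^ n) * qPoch q (b * q ^ (n + 1)) m := by
    rw [qPoch_succ', pow_succ, mul_assoc]
  simp only [fineTerm, fineCert, e1, e2, e3, e4]
  rw [qPoch_succ] at hm
  have h1 := left_ne_zero_of_mul hm
  have h2 := right_ne_zero_of_mul hm
  simp only [qPoch_succ]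
  generalize qPoch q (b * q ^ (n + 1)) m = B
  generalize qPoch q (a * q) n = A
  generalize qPoch q t m = T
  generalize qPoch q q m = Q at *
  simp only [pow_succ, pow_add]
  generalize q ^ m = X at *
  have h3 : 1 - X * q ≠ 0 := by rwa [mul_comm]
  field_simp
  ring

lemma sum_fineTerm_succ {q : ℂ} (a b t : ℂ) {N : ℕ} (hq : qPoch q q (N + 1) ≠ 0) :
    ∑ n ∈ Finset.range (N + 2), fineTerm q a b t (N + 1) n =
      (1 - a * t * q * q ^ N) * ∑ n ∈ Finset.range (N + 1), fineTerm q a b t N n +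
        qPoch q b (N + 1) * qPoch q t (N + 1) * q ^ (N + 1) / qPoch q q (N + 1) := by
  have h : ∑ n ∈ Finset.range (N + 1),
      (fineTerm q a b t (N + 1) n - (1 - a * t * q * q ^ N) * fineTerm q a b t N n) =
        fineCert q a b t N (N + 1) - fineCert q a b t N 0 := by
    rw [← Finset.sum_range_sub]
    refine Finset.sum_congr rfl fun n hn => ?_
    exact fineTerm_telescope a b t (by simpa [Nat.lt_succ_iff] using hn) hq
  have hlast : fineTerm q a b t (N + 1) (N + 1) = -fineCert q a b t N (N + 1) := by
    simp [fineTerm, fineCert, qPoch_zero]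
  have hzero : fineCert q a b t N 0 =
      -(qPoch q b (N + 1) * qPoch q t (N + 1) * q ^ (N + 1) / qPoch q q (N + 1)) := by
    simp only [fineCert, qPoch_zero, Nat.sub_zero, pow_zero, mul_one, one_mul]
    ring
  rw [Finset.sum_sub_distrib, ← Finset.mul_sum] at h
  rw [Finset.sum_range_succ, hlast]
  linear_combination h - hzero

lemma sum_fineTerm (N : ℕ) (q a b t : ℂ) (hq : qPoch q q N ≠ 0)
    (hat : qPoch q (a * t * q) N ≠ 0) :
    ∑ n ∈ Finset.range (N + 1), fineTerm q a b t N n =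
      qPoch q (a * t * q) N * ∑ n ∈ Finset.range (N + 1),
        qPoch q b n * qPoch q t n * q ^ n / (qPoch q (a * t * q) n * qPoch q q n) := by
  induction N with
  | zero => simp [fineTerm, qPoch_zero]
  | succ N ih =>
    have ih' := ih (qPoch_ne_zero_of_le N.le_succ hq) (qPoch_ne_zero_of_le N.le_succ hat)
    rw [sum_fineTerm_succ a b t hq, ih', Finset.sum_range_succ _ (N + 1), mul_add]
    congr 1
    · rw [qPoch_succ q (a * t * q) N]
      ring
    · field_simp

theorem fineF_heine_form (N : ℕ) (q a b t : ℂ)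
    (hq : qPoch q q N ≠ 0) (hb : qPoch q (b * q) N ≠ 0)
    (ht : qPoch q t N ≠ 0) (hat : qPoch q (a * t * q) N ≠ 0) :
    fineF q a b t N =
      qPoch q (a * t * q) N * qPoch q q N / (qPoch q t N * qPoch q (b * q) N) *
        ∑ n ∈ Finset.range (N + 1),
          qPoch q b n * qPoch q t n * q ^ n / (qPoch q (a * t * q) n * qPoch q q n) := by
  rw [mul_comm (qPoch q (a * t * q) N), mul_div_right_comm, mul_assoc,
    ← sum_fineTerm N q a b t hq hat, Finset.mul_sum, fineF]
  refine Finset.sum_congr rfl fun n hn => ?_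
  obtain ⟨m, rfl⟩ := Nat.exists_eq_add_of_le (Nat.lt_succ_iff.mp (Finset.mem_range.mp hn))
  have hn' : qPoch q q n ≠ 0 := qPoch_ne_zero_of_le (by omega) hq
  have hm' : qPoch q q m ≠ 0 := qPoch_ne_zero_of_le (by omega) hq
  have e : b * q ^ (n + 1) = b * q * q ^ n := by ring
  rw [qPoch_add q (b * q)] at hb
  have hb1 := left_ne_zero_of_mul hb
  have hb2 := right_ne_zero_of_mul hb
  simp only [qBinom, fineTerm, Nat.add_sub_cancel_left, e, qPoch_add q (b * q)]
  generalize qPoch q (b * q) n = B₁ at *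
  generalize qPoch q (b * q * q ^ n) m = B₂ at *
  field_simp
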